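/- (Theorem 3.1, first part.) The convex Blaschke–Santaló diagram 𝓔ᶜ := { (|Ω|·λ₁(Ω), |Ω|·μ₁(Ω)) : Ω ⊆ ℝ² nonempty bounded open convex } is a closed subset of ℝ². -/

import Mathlib

open MeasureTheory Filter Set Real RealInnerProductSpace

noncomputable section

abbrev E2 : Type := EuclideanSpace ℝ (Fin 2)

/-- First Dirichlet eigenvalue, variational characterization. -/
noncomputable def dEig1 (Ω : Set E2) : ℝ :=
  sInf { R : ℝ | ∃ u : E2 → ℝ, ContDiff ℝ (⊤ : ℕ∞) u ∧ HasCompactSupport u ∧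
    tsupport u ⊆ Ω ∧ (∫ x, (u x)^2) ≠ 0 ∧
    R = (∫ x, ‖fderiv ℝ u x‖^2) / (∫ x, (u x)^2) }

/-- First nontrivial Neumann eigenvalue, variational characterization. -/
noncomputable def nEig1 (Ω : Set E2) : ℝ :=
  sInf { R : ℝ | ∃ u : E2 → ℝ, ContDiff ℝ (⊤ : ℕ∞) u ∧ (∫ x in Ω, u x) = 0 ∧
    (∫ x in Ω, (u x)^2) ≠ 0 ∧
    R = (∫ x in Ω, ‖fderiv ℝ u x‖^2) / (∫ x in Ω, (u x)^2) }

/-- The open unit disc in the plane. -/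
def unitDisc : Set E2 := Metric.ball 0 1

/-- The Blaschke–Santaló diagram 𝓔ᶜ for bounded open convex sets. -/
def diagEC : Set (ℝ × ℝ) :=
  { p | ∃ Ω : Set E2, Ω.Nonempty ∧ IsOpen Ω ∧ Bornology.IsBounded Ω ∧ Convex ℝ Ω ∧
      p = ((volume Ω).toReal * dEig1 Ω, (volume Ω).toReal * nEig1 Ω) }

/-!
Both products `|Ω| λ₁(Ω)` and `|Ω| μ₁(Ω)` are invariant under homotheties of the plane, so each
domain may be translated and rescaled. If `|Ω| λ₁(Ω) ≤ M`, then `Ω` cannot be thin: a domain in a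
strip of width `w` has `λ₁ ≥ 1 / w²`, and together with the area of an almost maximal inscribed
triangle this places a normalized copy of `Ω` between two balls around the origin whose radii
depend only on `M`. The gauges of such domains are equi-Lipschitz, hence converge uniformly on
bounded sets along an ultrafilter, and the sublevel set of the limit is a limit domain: for every
`k > 1`, it and the domains of the sequence are eventually contained in `k` times each other. Area
and eigenvalues are continuous for this convergence: for `λ₁` by domain monotonicity and scaling;
for `μ₁`, which is not monotone, by comparing a test function `u` with `x ↦ u (k⁻¹ x)`, the
difference being controlled by `∫ ‖∇u‖²`.
-/

open Metric Module Topology Pointwise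

/-! ### Integral inequalities and changes of variables -/

section Integration

theorem sq_integral_mul_le {α : Type*} [MeasurableSpace α] {μ : Measure α} {f g : α → ℝ}
    (hf : Integrable (fun x ↦ f x ^ 2) μ) (hg : Integrable (fun x ↦ g x ^ 2) μ)
    (hfg : Integrable (fun x ↦ f x * g x) μ) :
    (∫ x, f x * g x ∂μ) ^ 2 ≤ (∫ x, f x ^ 2 ∂μ) * ∫ x, g x ^ 2 ∂μ := by
  have discrim_nonpos :
      discrim (∫ x, f x ^ 2 ∂μ) (2 * ∫ x, f x * g x ∂μ) (∫ x, g x ^ 2 ∂μ) ≤ 0 := by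
    refine discrim_le_zero fun t ↦ ?_
    calc 0 ≤ ∫ x, (t * f x + g x) ^ 2 ∂μ := by positivity
      _ = ∫ x, (t * t * f x ^ 2 + 2 * t * (f x * g x)) + g x ^ 2 ∂μ := by
        congr with x; ring
      _ = t * t * (∫ x, f x ^ 2 ∂μ) + 2 * t * (∫ x, f x * g x ∂μ) + ∫ x, g x ^ 2 ∂μ := by
        rw [integral_add (by fun_prop) hg, integral_add (hf.const_mul _) (hfg.const_mul _),
          integral_const_mul, integral_const_mul]
      _ = _ := by ring
  rw [discrim] at discrim_nonpos
  linarith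

theorem integral_sq_le_integral_sub_const_sq {α : Type*} [MeasurableSpace α] {μ : Measure α}
    [IsFiniteMeasure μ] {u : α → ℝ} (hu : Integrable u μ) (hu2 : Integrable (fun x ↦ u x ^ 2) μ)
    (hu0 : ∫ x, u x ∂μ = 0) (c : ℝ) : ∫ x, u x ^ 2 ∂μ ≤ ∫ x, (u x - c) ^ 2 ∂μ :=
  calc ∫ x, u x ^ 2 ∂μ
      = ∫ x, u x ^ 2 - 2 * c * u x ∂μ := by
        rw [integral_sub hu2 (hu.const_mul _), integral_const_mul, hu0, mul_zero, sub_zero]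
    _ ≤ ∫ x, (u x ^ 2 - 2 * c * u x) + c ^ 2 ∂μ :=
        integral_mono (by fun_prop) (by fun_prop) fun x ↦ le_add_of_nonneg_right (sq_nonneg c)
    _ = ∫ x, (u x - c) ^ 2 ∂μ := by congr with x; ring

theorem integrableOn_of_continuous_of_isBounded {E F : Type*} [MetricSpace E]
    [ProperSpace E] [MeasurableSpace E] [BorelSpace E] [NormedAddCommGroup F] {μ : Measure E}
    [IsFiniteMeasureOnCompacts μ] {f : E → F} {s : Set E} (hf : Continuous f)
    (hs : Bornology.IsBounded s) : IntegrableOn f s μ :=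
  (hf.continuousOn.integrableOn_compact hs.isCompact_closure).mono_set subset_closure

variable {E F : Type*} [NormedAddCommGroup E] [NormedSpace ℝ E] [MeasurableSpace E] [BorelSpace E]
  [FiniteDimensional ℝ E] [NormedAddCommGroup F] [NormedSpace ℝ F]
  (μ : Measure E) [μ.IsAddHaarMeasure]

theorem setIntegral_comp_add_smul (f : E → F) (s : Set E) (a : E) {k : ℝ} (hk : 0 < k) :
    ∫ x in s, f (a + k • x) ∂μ = (k ^ finrank ℝ E)⁻¹ • ∫ x in a +ᵥ k • s, f x ∂μ := by
  rw [Measure.setIntegral_comp_smul_of_pos μ (fun x ↦ f (a + x)) s hk, ← image_vadd]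
  congr 1
  exact ((measurePreserving_add_left μ a).setIntegral_image_emb
    (measurableEmbedding_addLeft a) f (k • s)).symm

theorem measureReal_vadd_smul (s : Set E) (a : E) {k : ℝ} (hk : 0 ≤ k) :
    μ.real (a +ᵥ k • s) = k ^ finrank ℝ E * μ.real s := by
  simp [Measure.real, measure_vadd, Measure.addHaar_smul_of_nonneg μ hk, hk]

end Integration

/-! ### Eigenvalues as infima of Rayleigh quotients -/

section Eigenvalues

variable {E : Type*} [NormedAddCommGroup E] [NormedSpace ℝ E] [MeasurableSpace E]

/-- The Rayleigh quotient of `u` with respect to `μ`; by convention it is `0` if `∫ u² = 0`. -/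
def rayleighQuotient (μ : Measure E) (u : E → ℝ) : ℝ :=
  (∫ x, ‖fderiv ℝ u x‖ ^ 2 ∂μ) / ∫ x, u x ^ 2 ∂μ

/-- The test functions for the first Dirichlet eigenvalue of `Ω`. -/
def dirichletTests (μ : Measure E) (Ω : Set E) : Set (E → ℝ) :=
  {u | ContDiff ℝ (⊤ : ℕ∞) u ∧ HasCompactSupport u ∧ tsupport u ⊆ Ω ∧ ∫ x, u x ^ 2 ∂μ ≠ 0}

/-- The test functions for the first nontrivial Neumann eigenvalue of the measure `ν`. -/
def neumannTests (ν : Measure E) : Set (E → ℝ) :=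
  {u | ContDiff ℝ (⊤ : ℕ∞) u ∧ ∫ x, u x ∂ν = 0 ∧ ∫ x, u x ^ 2 ∂ν ≠ 0}

/-- The first Dirichlet eigenvalue of `Ω`; `dEig1` is the case of Lebesgue measure on the plane. -/
def dirichletEigenvalue (μ : Measure E) (Ω : Set E) : ℝ :=
  sInf (rayleighQuotient μ '' dirichletTests μ Ω)

/-- The first nontrivial Neumann eigenvalue of a measure `ν`. The Neumann eigenvalue of a domain `Ω`
is that of the Lebesgue measure restricted to `Ω`. -/
def neumannEigenvalue (ν : Measure E) : ℝ :=
  sInf (rayleighQuotient ν '' neumannTests ν)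

theorem dEig1_eq_dirichletEigenvalue (Ω : Set E2) : dEig1 Ω = dirichletEigenvalue volume Ω := by
  rw [dEig1, dirichletEigenvalue]
  congr 1
  ext R
  simp only [dirichletTests, rayleighQuotient, mem_image, mem_ofPred_eq, and_assoc,
    eq_comm (a := R)]

theorem nEig1_eq_neumannEigenvalue (Ω : Set E2) :
    nEig1 Ω = neumannEigenvalue (volume.restrict Ω) := by
  rw [nEig1, neumannEigenvalue]
  congr 1
  ext R
  simp only [neumannTests, rayleighQuotient, mem_image, mem_ofPred_eq, and_assoc, eq_comm (a := R)]

theorem rayleighQuotient_nonneg (μ : Measure E) (u : E → ℝ) : 0 ≤ rayleighQuotient μ u := by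
  unfold rayleighQuotient
  positivity

theorem bddBelow_rayleighQuotient_image (μ : Measure E) (s : Set (E → ℝ)) :
    BddBelow (rayleighQuotient μ '' s) :=
  ⟨0, forall_mem_image.2 fun u _ ↦ rayleighQuotient_nonneg μ u⟩

theorem le_mul_sInf_rayleighQuotient_image {μ : Measure E} {s : Set (E → ℝ)} (hs : s.Nonempty)
    {a K : ℝ} (hK : 0 ≤ K) (h : ∀ u ∈ s, a ≤ K * rayleighQuotient μ u) :
    a ≤ K * sInf (rayleighQuotient μ '' s) := by
  rw [← smul_eq_mul, ← Real.sInf_smul_of_nonneg hK, ← image_smul, image_image]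
  exact le_csInf (hs.image _) (forall_mem_image.2 h)

theorem neumannEigenvalue_nonneg (ν : Measure E) : 0 ≤ neumannEigenvalue ν :=
  Real.sInf_nonneg (forall_mem_image.2 fun u _ ↦ rayleighQuotient_nonneg ν u)

theorem neumannEigenvalue_mul_integral_sub_average_sq_le (ν : Measure E) [IsFiniteMeasure ν]
    {u : E → ℝ} (hu : ContDiff ℝ (⊤ : ℕ∞) u) :
    neumannEigenvalue ν * ∫ x, (u x - ⨍ y, u y ∂ν) ^ 2 ∂ν ≤ ∫ x, ‖fderiv ℝ u x‖ ^ 2 ∂ν := by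
  have hnonneg : 0 ≤ ∫ x, (u x - ⨍ y, u y ∂ν) ^ 2 ∂ν := by positivity
  rcases hnonneg.eq_or_lt with hzero | hpos
  · rw [← hzero, mul_zero]
    positivity
  · have hmem : (fun x ↦ u x - ⨍ y, u y ∂ν) ∈ neumannTests ν :=
      ⟨hu.sub contDiff_const, integral_sub_average ν u, hpos.ne'⟩
    have hle : neumannEigenvalue ν ≤ rayleighQuotient ν fun x ↦ u x - ⨍ y, u y ∂ν :=
      csInf_le (bddBelow_rayleighQuotient_image ν _) (mem_image_of_mem _ hmem)
    simpa only [rayleighQuotient, fderiv_sub_const, le_div_iff₀ hpos] using hle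

section Existence

variable [BorelSpace E] [FiniteDimensional ℝ E] {μ : Measure E} [μ.IsOpenPosMeasure]
  {Ω : Set E}

theorem dirichletTests_nonempty [IsFiniteMeasureOnCompacts μ] (hΩ : IsOpen Ω) (hne : Ω.Nonempty) :
    (dirichletTests μ Ω).Nonempty := by
  obtain ⟨c, hc⟩ := hne
  obtain ⟨u, hu_supp, hu_compact, hu_smooth, -, hu_one⟩ :=
    exists_contDiff_tsupport_subset (E := E) (n := (⊤ : ℕ∞)) (hΩ.mem_nhds hc)
  refine ⟨u, hu_smooth, hu_compact, hu_supp, ?_⟩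
  have hpos : 0 < ∫ x, u x ^ 2 ∂μ :=
    (hu_smooth.continuous.pow 2).integral_pos_of_hasCompactSupport_nonneg_nonzero
      (hu_compact.comp_left (g := (· ^ 2)) (by simp)) (fun x ↦ sq_nonneg _) (x := c)
      (by simp [hu_one])
  exact hpos.ne'

theorem neumannTests_restrict_nonempty [Nontrivial E] [IsFiniteMeasureOnCompacts μ] (hΩ : IsOpen Ω)
    (hne : Ω.Nonempty) (hb : Bornology.IsBounded Ω) :
    (neumannTests (μ.restrict Ω)).Nonempty := by
  have : IsFiniteMeasure (μ.restrict Ω) := ⟨by simpa using hb.measure_lt_top⟩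
  have : ProperSpace E := FiniteDimensional.proper ℝ E
  obtain ⟨v, hv⟩ := exists_ne (0 : E)
  obtain ⟨ℓ, hℓ⟩ := SeparatingDual.exists_ne_zero (R := ℝ) hv
  set c := ⨍ x in Ω, ℓ x ∂μ
  have hcont : Continuous fun x ↦ (ℓ x - c) ^ 2 := by fun_prop
  refine ⟨fun x ↦ ℓ x - c, ℓ.contDiff.sub contDiff_const, integral_sub_average _ _, fun hzero ↦ ?_⟩
  have hae : (fun x ↦ (ℓ x - c) ^ 2) =ᵐ[μ.restrict Ω] fun _ ↦ 0 :=
    (integral_eq_zero_iff_of_nonneg (fun x ↦ sq_nonneg _)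
      (integrableOn_of_continuous_of_isBounded hcont hb)).1 hzero
  have hconst : EqOn ℓ (fun _ ↦ c) Ω := fun x hx ↦ by
    simpa [sub_eq_zero] using
      Measure.eqOn_open_of_ae_eq hae hΩ hcont.continuousOn continuousOn_const hx
  obtain ⟨p, hp⟩ := hne
  have hderiv : ℓ = 0 :=
    (ℓ.hasFDerivAt (x := p)).unique
      ((hasFDerivAt_const c p).congr_of_eventuallyEq (hconst.eventuallyEq_of_mem (hΩ.mem_nhds hp)))
  simp [hderiv] at hℓ

end Existence

theorem dirichletEigenvalue_anti {μ : Measure E} {A B : Set E} (hAB : A ⊆ B)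
    (hA : (dirichletTests μ A).Nonempty) : dirichletEigenvalue μ B ≤ dirichletEigenvalue μ A :=
  csInf_le_csInf (bddBelow_rayleighQuotient_image μ _) (hA.image _)
    (image_mono fun _ hu ↦ ⟨hu.1, hu.2.1, hu.2.2.1.trans hAB, hu.2.2.2⟩)

end Eigenvalues

/-! ### Behaviour under homotheties -/

section Scaling

variable {E : Type*} [NormedAddCommGroup E] [NormedSpace ℝ E]

theorem fderiv_comp_add_smul (u : E → ℝ) (a : E) (k : ℝ) (x : E) :
    fderiv ℝ (fun y ↦ u (a + k • y)) x = k • fderiv ℝ u (a + k • x) := by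
  rw [fderiv_comp_smul (f := fun z ↦ u (a + z)), fderiv_comp_add_left]

/-- The homothety `x ↦ a + k • x` as a self-homeomorphism. -/
def addSMulHomeomorph (a : E) {k : ℝ} (hk : k ≠ 0) : E ≃ₜ E :=
  (Homeomorph.smulOfNeZero k hk).trans (Homeomorph.addLeft a)

theorem addSMulHomeomorph_apply (a : E) {k : ℝ} (hk : k ≠ 0) (x : E) :
    addSMulHomeomorph a hk x = a + k • x := rfl

theorem image_addSMulHomeomorph (a : E) {k : ℝ} (hk : k ≠ 0) (Ω : Set E) :
    addSMulHomeomorph a hk '' Ω = a +ᵥ k • Ω := by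
  rw [← image_vadd, ← image_smul, image_image]
  rfl

theorem contDiff_comp_addSMulHomeomorph_iff {n : ℕ∞} {u : E → ℝ} (a : E) {k : ℝ} (hk : k ≠ 0) :
    ContDiff ℝ n (u ∘ addSMulHomeomorph a hk) ↔ ContDiff ℝ n u := by
  have hto : ContDiff ℝ n (addSMulHomeomorph a hk) := contDiff_const.add (contDiff_id.const_smul k)
  have hinv : ContDiff ℝ n (addSMulHomeomorph a hk).symm :=
    (contDiff_const.add contDiff_id).const_smul k⁻¹
  refine ⟨fun h ↦ ?_, fun h ↦ h.comp hto⟩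
  simpa [Function.comp_assoc] using h.comp hinv

theorem sInf_image_eq_mul_sInf_image_preimage {X Y : Type*} {R : X → ℝ} {R' : Y → ℝ} {Φ : Y → X}
    (hΦ : Φ.Surjective) {c : ℝ} (hc : 0 ≤ c) (hR : ∀ y, R (Φ y) = c * R' y) (S : Set X) :
    sInf (R '' S) = c * sInf (R' '' (Φ ⁻¹' S)) := by
  have himage : R '' S = c • R' '' (Φ ⁻¹' S) := by
    conv_lhs => rw [← image_preimage_eq S hΦ]
    simp only [← image_smul, image_image, hR, smul_eq_mul]
  rw [himage, Real.sInf_smul_of_nonneg hc, smul_eq_mul]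

variable [MeasurableSpace E] [BorelSpace E] [FiniteDimensional ℝ E]
  (μ : Measure E) [μ.IsAddHaarMeasure] {k : ℝ}

theorem rayleighQuotient_restrict_comp_addSMulHomeomorph (u : E → ℝ) (Ω : Set E) (a : E)
    (hk : 0 < k) :
    rayleighQuotient (μ.restrict Ω) (u ∘ addSMulHomeomorph a hk.ne') =
      k ^ 2 * rayleighQuotient (μ.restrict (a +ᵥ k • Ω)) u := by
  have hpow : (k ^ finrank ℝ E)⁻¹ ≠ 0 := by positivity
  have henergy : ∫ x in Ω, ‖fderiv ℝ (u ∘ addSMulHomeomorph a hk.ne') x‖ ^ 2 ∂μ =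
      (k ^ finrank ℝ E)⁻¹ * (k ^ 2 * ∫ x in a +ᵥ k • Ω, ‖fderiv ℝ u x‖ ^ 2 ∂μ) := by
    rw [← integral_const_mul, ← smul_eq_mul, ← setIntegral_comp_add_smul μ _ Ω a hk]
    refine integral_congr_ae (.of_forall fun x ↦ ?_)
    simp only [Function.comp_def, addSMulHomeomorph_apply, fderiv_comp_add_smul, norm_smul,
      mul_pow, norm_eq_abs, sq_abs]
  have hmass : ∫ x in Ω, (u ∘ addSMulHomeomorph a hk.ne') x ^ 2 ∂μ =
      (k ^ finrank ℝ E)⁻¹ * ∫ x in a +ᵥ k • Ω, u x ^ 2 ∂μ :=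
    setIntegral_comp_add_smul μ (fun x ↦ u x ^ 2) Ω a hk
  rw [rayleighQuotient, henergy, hmass, mul_div_mul_left _ _ hpow, mul_div_assoc, rayleighQuotient]

theorem comp_addSMulHomeomorph_mem_neumannTests_iff (u : E → ℝ) (Ω : Set E) (a : E) (hk : 0 < k) :
    u ∘ addSMulHomeomorph a hk.ne' ∈ neumannTests (μ.restrict Ω) ↔
      u ∈ neumannTests (μ.restrict (a +ᵥ k • Ω)) := by
  have hpow : (k ^ finrank ℝ E)⁻¹ ≠ 0 := by positivity
  simp only [neumannTests, mem_ofPred_eq, contDiff_comp_addSMulHomeomorph_iff,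
    Function.comp_apply, addSMulHomeomorph_apply,
    setIntegral_comp_add_smul μ _ Ω a hk, setIntegral_comp_add_smul μ (u · ^ 2) Ω a hk,
    smul_eq_mul, mul_eq_zero, ne_eq, hpow, false_or]

theorem comp_addSMulHomeomorph_mem_dirichletTests_iff (u : E → ℝ) (Ω : Set E) (a : E)
    (hk : 0 < k) :
    u ∘ addSMulHomeomorph a hk.ne' ∈ dirichletTests μ Ω ↔
      u ∈ dirichletTests μ (a +ᵥ k • Ω) := by
  have hpow : (k ^ finrank ℝ E)⁻¹ ≠ 0 := by positivity
  have hmass : ∫ x, u (a + k • x) ^ 2 ∂μ = (k ^ finrank ℝ E)⁻¹ * ∫ x, u x ^ 2 ∂μ := by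
    simpa [smul_set_univ₀ hk.ne'] using setIntegral_comp_add_smul μ (u · ^ 2) univ a hk
  have htsupport := tsupport_comp_eq_preimage u (addSMulHomeomorph a hk.ne')
  simp only [dirichletTests, mem_ofPred_eq, contDiff_comp_addSMulHomeomorph_iff, HasCompactSupport,
    htsupport, Homeomorph.isCompact_preimage, ← image_addSMulHomeomorph a hk.ne',
    Function.comp_apply, addSMulHomeomorph_apply, hmass, mul_eq_zero, ne_eq, hpow, false_or]
  rw [← image_subset_image_iff (addSMulHomeomorph a hk.ne').injective,
    image_preimage_eq _ (addSMulHomeomorph a hk.ne').surjective]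

theorem dirichletEigenvalue_eq_sq_mul (Ω : Set E) (a : E) (hk : 0 < k) :
    dirichletEigenvalue μ Ω = k ^ 2 * dirichletEigenvalue μ (a +ᵥ k • Ω) := by
  rw [dirichletEigenvalue, sInf_image_eq_mul_sInf_image_preimage
    (addSMulHomeomorph a hk.ne').injective.surjective_comp_right (sq_nonneg k) (fun u ↦ ?_)]
  · congr with u
    exact comp_addSMulHomeomorph_mem_dirichletTests_iff μ u Ω a hk
  · simpa [smul_set_univ₀ hk.ne'] using
      rayleighQuotient_restrict_comp_addSMulHomeomorph μ u univ a hk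

theorem neumannEigenvalue_restrict_eq_sq_mul (Ω : Set E) (a : E) (hk : 0 < k) :
    neumannEigenvalue (μ.restrict Ω) = k ^ 2 * neumannEigenvalue (μ.restrict (a +ᵥ k • Ω)) := by
  rw [neumannEigenvalue, sInf_image_eq_mul_sInf_image_preimage
    (addSMulHomeomorph a hk.ne').injective.surjective_comp_right (sq_nonneg k)
    (rayleighQuotient_restrict_comp_addSMulHomeomorph μ · Ω a hk)]
  congr with u
  exact comp_addSMulHomeomorph_mem_neumannTests_iff μ u Ω a hk

end Scaling

/-! ### The Dirichlet eigenvalue of a set contained in a strip -/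

section Strip

variable {E : Type*} [NormedAddCommGroup E] [NormedSpace ℝ E] [MeasurableSpace E] [BorelSpace E]
  {μ : Measure E} {u : E → ℝ}

theorem integral_fderiv_apply_sq_le [IsFiniteMeasureOnCompacts μ] (hu : ContDiff ℝ 1 u)
    (hu_supp : HasCompactSupport u) (v : E) :
    ∫ x, fderiv ℝ u x v ^ 2 ∂μ ≤ ‖v‖ ^ 2 * ∫ x, ‖fderiv ℝ u x‖ ^ 2 ∂μ := by
  have := hu.continuous_fderiv one_ne_zero
  have hi_energy : Integrable (fun x ↦ ‖fderiv ℝ u x‖ ^ 2) μ :=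
    Continuous.integrable_of_hasCompactSupport (by fun_prop)
      ((hu_supp.fderiv ℝ).comp_left (g := fun L : E →L[ℝ] ℝ ↦ ‖L‖ ^ 2) (by simp))
  have hi_deriv : Integrable (fun x ↦ fderiv ℝ u x v ^ 2) μ :=
    Continuous.integrable_of_hasCompactSupport (by fun_prop)
      ((hu_supp.fderiv ℝ).comp_left (g := fun L : E →L[ℝ] ℝ ↦ L v ^ 2) (by simp))
  rw [← integral_const_mul]
  refine integral_mono hi_deriv (hi_energy.const_mul _) fun x ↦ ?_
  rw [← mul_pow, ← sq_abs (fderiv ℝ u x v), mul_comm]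
  gcongr
  exact (fderiv ℝ u x).le_opNorm v

variable [FiniteDimensional ℝ E] [μ.IsAddHaarMeasure]

theorem apply_mul_integral_sq_eq (hu : ContDiff ℝ 1 u) (hu_supp : HasCompactSupport u)
    (ℓ : E →L[ℝ] ℝ) (c : ℝ) (v : E) :
    ℓ v * ∫ x, u x ^ 2 ∂μ = -∫ x, (2 * (ℓ x - c) * u x) * fderiv ℝ u x v ∂μ := by
  have hcont := hu.continuous
  have := hu.continuous_fderiv one_ne_zero
  have hd := hu.differentiable one_ne_zero
  have hfderiv_sq (x : E) : fderiv ℝ (fun y ↦ u y ^ 2) x v = 2 * u x * fderiv ℝ u x v := by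
    simp [fderiv_fun_pow 2 (hd x)]
  have hfderiv (x : E) : fderiv ℝ (fun y ↦ ℓ y - c) x v = ℓ v := by
    rw [fderiv_sub_const, ℓ.fderiv]
  have hintegrable {f : E → ℝ} (hf : Continuous f) (h0 : ∀ x, u x = 0 → f x = 0) :
      Integrable f μ :=
    hf.integrable_of_hasCompactSupport (hu_supp.mono fun x hx hux ↦ hx (h0 x hux))
  have ibp := integral_mul_fderiv_eq_neg_fderiv_mul_of_integrable (μ := μ) (v := v)
    (f := fun x ↦ ℓ x - c) (g := fun x ↦ u x ^ 2)
    (hintegrable (by simp only [hfderiv]; fun_prop) (by simp +contextual))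
    (hintegrable (by simp only [hfderiv_sq]; fun_prop) (by simp +contextual [hfderiv_sq]))
    (hintegrable (by fun_prop) (by simp +contextual))
    (by fun_prop) (by fun_prop)
  simp only [hfderiv, hfderiv_sq, integral_const_mul] at ibp
  rw [← neg_eq_iff_eq_neg.2 ibp]
  congr with x
  ring

theorem sq_apply_mul_integral_sq_le (hu : ContDiff ℝ 1 u) (hu_supp : HasCompactSupport u)
    {ℓ : E →L[ℝ] ℝ} {c W : ℝ} (hW : ∀ x ∈ tsupport u, |ℓ x - c| ≤ W) (v : E) :
    ℓ v ^ 2 * ∫ x, u x ^ 2 ∂μ ≤ (2 * W * ‖v‖) ^ 2 * ∫ x, ‖fderiv ℝ u x‖ ^ 2 ∂μ := by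
  have hcont := hu.continuous
  have := hu.continuous_fderiv one_ne_zero
  have hintegrable {f : E → ℝ} (hf : Continuous f) (h0 : ∀ x, u x = 0 → f x = 0) :
      Integrable f μ :=
    hf.integrable_of_hasCompactSupport (hu_supp.mono fun x hx hux ↦ hx (h0 x hux))
  have hi_deriv : Integrable (fun x ↦ fderiv ℝ u x v ^ 2) μ :=
    Continuous.integrable_of_hasCompactSupport (by fun_prop)
      ((hu_supp.fderiv ℝ).comp_left (g := fun L : E →L[ℝ] ℝ ↦ L v ^ 2) (by simp))
  have hi_mass : Integrable (fun x ↦ (2 * (ℓ x - c) * u x) ^ 2) μ :=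
    hintegrable (by fun_prop) (by simp +contextual)
  have hderiv_le := integral_fderiv_apply_sq_le (μ := μ) hu hu_supp v
  have hmass_le : ∫ x, (2 * (ℓ x - c) * u x) ^ 2 ∂μ ≤ (2 * W) ^ 2 * ∫ x, u x ^ 2 ∂μ := by
    rw [← integral_const_mul]
    refine integral_mono hi_mass (hintegrable (by fun_prop) (by simp +contextual)) fun x ↦ ?_
    by_cases hx : u x = 0
    · simp [hx]
    · have hℓ_sq : (ℓ x - c) ^ 2 ≤ W ^ 2 :=
        sq_le_sq.2 <| (hW x (subset_tsupport u hx)).trans (le_abs_self W)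
      simp only [mul_pow]
      gcongr
  have cauchy_schwarz := sq_integral_mul_le (μ := μ) (f := fun x ↦ 2 * (ℓ x - c) * u x)
    (g := fun x ↦ fderiv ℝ u x v) hi_mass hi_deriv
    (hintegrable (by fun_prop) (by simp +contextual))
  rw [← neg_sq, ← apply_mul_integral_sq_eq hu hu_supp] at cauchy_schwarz
  have hmass_nonneg : 0 ≤ ∫ x, u x ^ 2 ∂μ := by positivity
  rcases hmass_nonneg.eq_or_lt with hzero | hpos
  · rw [← hzero, mul_zero]
    positivity
  · refine le_of_mul_le_mul_right ?_ hpos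
    calc ℓ v ^ 2 * (∫ x, u x ^ 2 ∂μ) * ∫ x, u x ^ 2 ∂μ
        = (ℓ v * ∫ x, u x ^ 2 ∂μ) ^ 2 := by ring
      _ ≤ ((2 * W) ^ 2 * ∫ x, u x ^ 2 ∂μ) * (‖v‖ ^ 2 * ∫ x, ‖fderiv ℝ u x‖ ^ 2 ∂μ) :=
        cauchy_schwarz.trans (by gcongr)
      _ = _ := by ring

theorem norm_sq_le_mul_dirichletEigenvalue {Ω : Set E} (hΩ : IsOpen Ω) (hne : Ω.Nonempty)
    {ℓ : E →L[ℝ] ℝ} {c W : ℝ} (hW : ∀ x ∈ Ω, |ℓ x - c| ≤ W) :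
    ‖ℓ‖ ^ 2 ≤ (2 * W) ^ 2 * dirichletEigenvalue μ Ω := by
  refine le_mul_sInf_rayleighQuotient_image (dirichletTests_nonempty hΩ hne) (sq_nonneg _) ?_
  rintro u ⟨hu_smooth, hu_supp, hu_sub, hu_ne⟩
  have hmass : 0 < ∫ x, u x ^ 2 ∂μ := lt_of_le_of_ne (by positivity) hu_ne.symm
  have hnonneg := mul_nonneg (sq_nonneg (2 * W)) (rayleighQuotient_nonneg μ u)
  refine (Real.le_sqrt (norm_nonneg _) hnonneg).1 ?_
  refine ℓ.opNorm_le_bound (Real.sqrt_nonneg _) fun v ↦ ?_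
  refine abs_le_of_sq_le_sq ?_ (by positivity)
  rw [mul_pow, Real.sq_sqrt hnonneg, rayleighQuotient, mul_div_assoc', div_mul_eq_mul_div,
    le_div_iff₀ hmass]
  have hdir := sq_apply_mul_integral_sq_le (μ := μ) (hu_smooth.of_le (by simp)) hu_supp
    (fun x hx ↦ hW x (hu_sub hx)) v
  linarith

end Strip

/-! ### Comparison of Neumann eigenvalues of nested star-shaped domains -/

section Dilation

variable {E : Type*} [NormedAddCommGroup E] [NormedSpace ℝ E] {u : E → ℝ} {s : ℝ}

theorem sq_sub_comp_smul_le (hu : ContDiff ℝ 1 u) (hs : s ≤ 1) (x : E) :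
    (u x - u (s • x)) ^ 2 ≤ (1 - s) * ‖x‖ ^ 2 * ∫ t in Ioc s 1, ‖fderiv ℝ u (t • x)‖ ^ 2 := by
  have := hu.continuous_fderiv one_ne_zero
  have hderiv (t : ℝ) : HasDerivAt (fun t : ℝ ↦ u (t • x)) (fderiv ℝ u (t • x) x) t :=
    (hu.differentiable one_ne_zero _).hasFDerivAt.comp_hasDerivAt t
      (by simpa using (hasDerivAt_id t).smul_const x)
  have hcont_deriv : Continuous fun t : ℝ ↦ fderiv ℝ u (t • x) x := by fun_prop
  have hcont_energy : Continuous fun t : ℝ ↦ ‖fderiv ℝ u (t • x)‖ ^ 2 := by fun_prop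
  have ftc : u x - u (s • x) = ∫ t in Ioc s 1, 1 * fderiv ℝ u (t • x) x := by
    simpa [intervalIntegral.integral_of_le hs] using
      (intervalIntegral.integral_eq_sub_of_hasDerivAt (fun t _ ↦ hderiv t)
        (hcont_deriv.intervalIntegrable s 1)).symm
  have hderiv_le : ∫ t in Ioc s 1, fderiv ℝ u (t • x) x ^ 2 ≤
      ‖x‖ ^ 2 * ∫ t in Ioc s 1, ‖fderiv ℝ u (t • x)‖ ^ 2 := by
    rw [← integral_const_mul]
    refine integral_mono (hcont_deriv.pow 2).integrableOn_Ioc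
      (hcont_energy.integrableOn_Ioc.const_mul _) fun t ↦ ?_
    rw [← mul_pow, ← sq_abs (fderiv ℝ u (t • x) x), mul_comm]
    gcongr
    exact (fderiv ℝ u (t • x)).le_opNorm x
  calc (u x - u (s • x)) ^ 2
      ≤ (∫ _ in Ioc s 1, (1 : ℝ) ^ 2) * ∫ t in Ioc s 1, fderiv ℝ u (t • x) x ^ 2 := by
        rw [ftc]
        exact sq_integral_mul_le continuous_const.integrableOn_Ioc
          (hcont_deriv.pow 2).integrableOn_Ioc (continuous_const.mul hcont_deriv).integrableOn_Ioc
    _ ≤ (1 - s) * (‖x‖ ^ 2 * ∫ t in Ioc s 1, ‖fderiv ℝ u (t • x)‖ ^ 2) := by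
        simp only [one_pow, setIntegral_const, Real.volume_real_Ioc_of_le hs, smul_eq_mul, mul_one]
        gcongr
    _ = _ := by ring

variable [MeasurableSpace E] [BorelSpace E] [FiniteDimensional ℝ E] {μ : Measure E}
  [μ.IsAddHaarMeasure] {A B : Set E} {R : ℝ}

theorem setIntegral_comp_smul_le {f : E → ℝ} (hf : ∀ x, 0 ≤ f x) (hfA : IntegrableOn f A μ)
    (hs : 0 < s) (hsB : s • B ⊆ A) :
    ∫ x in B, f (s • x) ∂μ ≤ (s ^ finrank ℝ E)⁻¹ * ∫ x in A, f x ∂μ := by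
  rw [Measure.setIntegral_comp_smul_of_pos μ f B hs, smul_eq_mul]
  exact mul_le_mul_of_nonneg_left
    (setIntegral_mono_set hfA (.of_forall hf) hsB.eventuallyLE) (by positivity)

theorem setIntegral_sub_comp_smul_sq_le (hu : ContDiff ℝ 1 u) (hs : 0 < s) (hs1 : s ≤ 1)
    (hB : MeasurableSet B) (hstar : StarConvex ℝ 0 B) (hBR : B ⊆ closedBall 0 R) :
    ∫ x in B, (u x - u (s • x)) ^ 2 ∂μ ≤
      (1 - s) ^ 2 * R ^ 2 * (s ^ finrank ℝ E)⁻¹ * ∫ x in B, ‖fderiv ℝ u x‖ ^ 2 ∂μ := by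
  have : ProperSpace E := FiniteDimensional.proper ℝ E
  have hcont := hu.continuous
  have := hu.continuous_fderiv one_ne_zero
  have hbdd : Bornology.IsBounded B := isBounded_closedBall.subset hBR
  have hi {f : E → ℝ} (hf : Continuous f) : IntegrableOn f B μ :=
    integrableOn_of_continuous_of_isBounded hf hbdd
  have hi_prod : Integrable (Function.uncurry fun (x : E) (t : ℝ) ↦ ‖fderiv ℝ u (t • x)‖ ^ 2)
      ((μ.restrict B).prod (volume.restrict (Ioc s 1))) := by
    rw [Measure.prod_restrict]
    exact integrableOn_of_continuous_of_isBounded (by unfold Function.uncurry; fun_prop)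
      (hbdd.prod (isBounded_Ioc s 1))
  calc ∫ x in B, (u x - u (s • x)) ^ 2 ∂μ
      ≤ ∫ x in B, (1 - s) * R ^ 2 * (∫ t in Ioc s 1, ‖fderiv ℝ u (t • x)‖ ^ 2) ∂μ := by
        refine setIntegral_mono_on (hi (by fun_prop)) (hi_prod.integral_prod_left.const_mul _) hB
          fun x hx ↦ (sq_sub_comp_smul_le hu hs1 x).trans ?_
        have : ‖x‖ ≤ R := mem_closedBall_zero_iff.1 (hBR hx)
        have : 0 ≤ 1 - s := sub_nonneg.2 hs1
        gcongr
    _ = (1 - s) * R ^ 2 * ∫ t in Ioc s 1, ∫ x in B, ‖fderiv ℝ u (t • x)‖ ^ 2 ∂μ := by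
        rw [integral_const_mul, integral_integral_swap hi_prod]
    _ ≤ (1 - s) * R ^ 2 *
          ∫ _ in Ioc s 1, (s ^ finrank ℝ E)⁻¹ * ∫ x in B, ‖fderiv ℝ u x‖ ^ 2 ∂μ := by
        refine mul_le_mul_of_nonneg_left ?_ (mul_nonneg (sub_nonneg.2 hs1) (sq_nonneg R))
        refine setIntegral_mono_on hi_prod.integral_prod_right (integrable_const _)
          measurableSet_Ioc fun t ht ↦ ?_
        have ht0 : 0 < t := hs.trans ht.1
        refine (setIntegral_comp_smul_le (f := fun x ↦ ‖fderiv ℝ u x‖ ^ 2)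
          (fun x ↦ by positivity) (hi (by fun_prop)) ht0
          (smul_set_subset_iff.2 fun x hx ↦ hstar.smul_mem hx ht0.le ht.2)).trans ?_
        have := ht.1.le
        gcongr
    _ = _ := by
        rw [setIntegral_const, Real.volume_real_Ioc_of_le hs1, smul_eq_mul]
        ring

theorem setIntegral_sq_le_of_smul_subset (hu : ContDiff ℝ 1 u) (hs : 0 < s) (hs1 : s < 1)
    (hA : Bornology.IsBounded A) (hB : MeasurableSet B) (hstar : StarConvex ℝ 0 B)
    (hBR : B ⊆ closedBall 0 R) (hsB : s • B ⊆ A) :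
    ∫ x in B, u x ^ 2 ∂μ ≤ (s ^ finrank ℝ E)⁻¹ *
      (s⁻¹ * ∫ x in A, u x ^ 2 ∂μ + (1 - s) * R ^ 2 * ∫ x in B, ‖fderiv ℝ u x‖ ^ 2 ∂μ) := by
  have : ProperSpace E := FiniteDimensional.proper ℝ E
  have hcont := hu.continuous
  have hs1' : 0 < 1 - s := sub_pos.2 hs1
  have hi {f : E → ℝ} (hf : Continuous f) : IntegrableOn f B μ :=
    integrableOn_of_continuous_of_isBounded hf (isBounded_closedBall.subset hBR)
  have hi_dilate := hi (f := fun x ↦ s⁻¹ * u (s • x) ^ 2) (by fun_prop)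
  have hi_diff := hi (f := fun x ↦ (1 - s)⁻¹ * (u x - u (s • x)) ^ 2) (by fun_prop)
  have weighted_sq_le (a b : ℝ) : a ^ 2 ≤ s⁻¹ * b ^ 2 + (1 - s)⁻¹ * (a - b) ^ 2 := by
    have hgap : s⁻¹ * b ^ 2 + (1 - s)⁻¹ * (a - b) ^ 2 - a ^ 2 =
        (s * a - b) ^ 2 / (s * (1 - s)) := by
      field_simp
      ring
    have : 0 ≤ (s * a - b) ^ 2 / (s * (1 - s)) := by positivity
    linarith
  calc ∫ x in B, u x ^ 2 ∂μ
      ≤ ∫ x in B, s⁻¹ * u (s • x) ^ 2 + (1 - s)⁻¹ * (u x - u (s • x)) ^ 2 ∂μ :=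
        integral_mono (hi (by fun_prop)) (hi (by fun_prop)) fun x ↦ weighted_sq_le _ _
    _ = s⁻¹ * (∫ x in B, u (s • x) ^ 2 ∂μ) + (1 - s)⁻¹ * ∫ x in B, (u x - u (s • x)) ^ 2 ∂μ := by
        rw [integral_add hi_dilate hi_diff, integral_const_mul, integral_const_mul]
    _ ≤ s⁻¹ * ((s ^ finrank ℝ E)⁻¹ * ∫ x in A, u x ^ 2 ∂μ) + (1 - s)⁻¹ *
          ((1 - s) ^ 2 * R ^ 2 * (s ^ finrank ℝ E)⁻¹ * ∫ x in B, ‖fderiv ℝ u x‖ ^ 2 ∂μ) := by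
        gcongr
        · exact setIntegral_comp_smul_le (fun x ↦ sq_nonneg (u x))
            (integrableOn_of_continuous_of_isBounded (by fun_prop) hA) hs hsB
        · exact setIntegral_sub_comp_smul_sq_le hu hs hs1.le hB hstar hBR
    _ = _ := by
        field_simp

theorem neumannEigenvalue_mul_setIntegral_sq_le_of_smul_subset (hu : ContDiff ℝ (⊤ : ℕ∞) u)
    (hu_mean : ∫ x in B, u x ∂μ = 0) (hs : 0 < s) (hs1 : s < 1) (hB : MeasurableSet B)
    (hstar : StarConvex ℝ 0 B) (hBR : B ⊆ closedBall 0 R) (hAB : A ⊆ B) (hsB : s • B ⊆ A) :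
    neumannEigenvalue (μ.restrict A) * ∫ x in B, u x ^ 2 ∂μ ≤ (s ^ finrank ℝ E)⁻¹ *
      (s⁻¹ + (1 - s) * R ^ 2 * neumannEigenvalue (μ.restrict A)) *
        ∫ x in B, ‖fderiv ℝ u x‖ ^ 2 ∂μ := by
  have : ProperSpace E := FiniteDimensional.proper ℝ E
  have hB_bdd : Bornology.IsBounded B := isBounded_closedBall.subset hBR
  have hA_bdd : Bornology.IsBounded A := hB_bdd.subset hAB
  have : IsFiniteMeasure (μ.restrict A) := ⟨by simpa using hA_bdd.measure_lt_top⟩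
  have : IsFiniteMeasure (μ.restrict B) := ⟨by simpa using hB_bdd.measure_lt_top⟩
  have hcont := hu.continuous
  have := hu.continuous_fderiv (by simp)
  have hi {f : E → ℝ} (hf : Continuous f) : IntegrableOn f B μ :=
    integrableOn_of_continuous_of_isBounded hf hB_bdd
  set ν := neumannEigenvalue (μ.restrict A)
  have hν : 0 ≤ ν := neumannEigenvalue_nonneg _
  set c := ⨍ x in A, u x ∂μ
  have hpoincare : ν * ∫ x in A, (u x - c) ^ 2 ∂μ ≤ ∫ x in B, ‖fderiv ℝ u x‖ ^ 2 ∂μ :=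
    (neumannEigenvalue_mul_integral_sub_average_sq_le _ hu).trans
      (setIntegral_mono_set (hi (by fun_prop)) (.of_forall fun x ↦ by positivity)
        hAB.eventuallyLE)
  calc ν * ∫ x in B, u x ^ 2 ∂μ
      ≤ ν * ∫ x in B, (u x - c) ^ 2 ∂μ := mul_le_mul_of_nonneg_left
        (integral_sq_le_integral_sub_const_sq (hi hcont) (hi (by fun_prop)) hu_mean c) hν
    _ ≤ ν * ((s ^ finrank ℝ E)⁻¹ * (s⁻¹ * ∫ x in A, (u x - c) ^ 2 ∂μ +
          (1 - s) * R ^ 2 * ∫ x in B, ‖fderiv ℝ u x‖ ^ 2 ∂μ)) := by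
        gcongr
        simpa only [fderiv_sub_const] using setIntegral_sq_le_of_smul_subset
          ((hu.sub contDiff_const).of_le (by simp)) hs hs1 hA_bdd hB hstar hBR hsB
    _ = (s ^ finrank ℝ E)⁻¹ * (s⁻¹ * (ν * ∫ x in A, (u x - c) ^ 2 ∂μ) +
          (1 - s) * R ^ 2 * ν * ∫ x in B, ‖fderiv ℝ u x‖ ^ 2 ∂μ) := by ring
    _ ≤ (s ^ finrank ℝ E)⁻¹ * (s⁻¹ * (∫ x in B, ‖fderiv ℝ u x‖ ^ 2 ∂μ) +
          (1 - s) * R ^ 2 * ν * ∫ x in B, ‖fderiv ℝ u x‖ ^ 2 ∂μ) := by gcongr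
    _ = _ := by ring

theorem neumannEigenvalue_restrict_le_of_smul_subset (hs : 0 < s) (hs1 : s < 1)
    (hB : MeasurableSet B) (hstar : StarConvex ℝ 0 B) (hBR : B ⊆ closedBall 0 R)
    (hB_tests : (neumannTests (μ.restrict B)).Nonempty) (hAB : A ⊆ B) (hsB : s • B ⊆ A) :
    neumannEigenvalue (μ.restrict A) ≤ (s ^ finrank ℝ E)⁻¹ *
      (s⁻¹ + (1 - s) * R ^ 2 * neumannEigenvalue (μ.restrict A)) *
        neumannEigenvalue (μ.restrict B) := by
  have hν := neumannEigenvalue_nonneg (μ.restrict A)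
  have : 0 ≤ 1 - s := sub_nonneg.2 hs1.le
  refine le_mul_sInf_rayleighQuotient_image hB_tests (by positivity) ?_
  rintro u ⟨hu, hu_mean, hu_ne⟩
  have hmass : 0 < ∫ x in B, u x ^ 2 ∂μ := lt_of_le_of_ne (by positivity) hu_ne.symm
  rw [rayleighQuotient, mul_div_assoc', le_div_iff₀ hmass]
  exact neumannEigenvalue_mul_setIntegral_sq_le_of_smul_subset hu hu_mean hs hs1 hB hstar hBR hAB
    hsB

theorem neumannEigenvalue_restrict_le_of_subset_smul {k : ℝ} (hk : 1 < k)
    (hB : MeasurableSet B) (hstar : StarConvex ℝ 0 B) (hBR : B ⊆ closedBall 0 R)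
    (hB_tests : (neumannTests (μ.restrict B)).Nonempty) (hAB : A ⊆ k • B) (hBA : B ⊆ k • A) :
    neumannEigenvalue (μ.restrict A) ≤ k ^ (2 * finrank ℝ E) *
      (1 + (1 - (k ^ 2)⁻¹) * R ^ 2 * neumannEigenvalue (μ.restrict A)) *
        neumannEigenvalue (μ.restrict B) := by
  have hk0 : 0 < k := one_pos.trans hk
  have hA_scale : neumannEigenvalue (μ.restrict (k⁻¹ • A)) =
      k ^ 2 * neumannEigenvalue (μ.restrict A) := by
    have h := neumannEigenvalue_restrict_eq_sq_mul μ A 0 (inv_pos.2 hk0)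
    rw [zero_vadd] at h
    rw [h]
    field_simp
  have hA_sub : k⁻¹ • A ⊆ B := by rwa [smul_set_subset_iff₀ (inv_ne_zero hk0.ne'), inv_inv]
  have hB_sub : (k ^ 2)⁻¹ • B ⊆ k⁻¹ • A := by
    rw [pow_two, mul_inv, mul_smul]
    exact smul_set_mono (by rwa [subset_smul_set_iff₀ hk0.ne'] at hBA)
  have hle := neumannEigenvalue_restrict_le_of_smul_subset (by positivity) (s := (k ^ 2)⁻¹)
    (inv_lt_one_of_one_lt₀ (one_lt_pow₀ hk two_ne_zero)) hB hstar hBR hB_tests hA_sub hB_sub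
  rw [hA_scale] at hle
  refine le_of_mul_le_mul_left (hle.trans_eq ?_) (pow_pos hk0 2)
  rw [inv_pow, inv_inv, inv_inv, ← pow_mul]
  ring

end Dilation

/-! ### Continuity under convergence up to homotheties -/

section Convergence

theorem tendsto_of_forall_eventually_le_and_le {ι : Type*} {l : Filter ι} {s : ι → ℝ} {m : ℝ}
    {c e : ℝ → ℝ} (hc : Tendsto c (𝓝[>] 1) (𝓝 1)) (he : Tendsto e (𝓝[>] 1) (𝓝 0))
    (h : ∀ k, 1 < k → ∀ᶠ i in l,
      s i ≤ c k * m + e k * s i * m ∧ m ≤ c k * s i + e k * m * s i) :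
    Tendsto s l (𝓝 m) := by
  have hden_upper : Tendsto (fun k ↦ 1 - e k * m) (𝓝[>] 1) (𝓝 1) := by
    simpa using (he.mul_const m).const_sub 1
  have hden_lower : Tendsto (fun k ↦ c k + e k * m) (𝓝[>] 1) (𝓝 1) := by
    simpa using hc.add (he.mul_const m)
  have hupper : Tendsto (fun k ↦ c k * m / (1 - e k * m)) (𝓝[>] 1) (𝓝 m) := by
    simpa only [one_mul, div_one] using! (hc.mul_const m).div hden_upper one_ne_zero
  have hlower : Tendsto (fun k ↦ m / (c k + e k * m)) (𝓝[>] 1) (𝓝 m) := by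
    simpa only [div_one] using! (tendsto_const_nhds (x := m)).div hden_lower one_ne_zero
  refine tendsto_order.2 ⟨fun b hb ↦ ?_, fun b hb ↦ ?_⟩
  · obtain ⟨k, hbk, hpos, hk⟩ := ((hlower.eventually (lt_mem_nhds hb)).and
      ((hden_lower.eventually (lt_mem_nhds one_pos)).and self_mem_nhdsWithin)).exists
    filter_upwards [h k hk] with i hi
    refine hbk.trans_le ((div_le_iff₀ hpos).2 ?_)
    linarith [hi.2]
  · obtain ⟨k, hbk, hpos, hk⟩ := ((hupper.eventually (gt_mem_nhds hb)).and
      ((hden_upper.eventually (lt_mem_nhds one_pos)).and self_mem_nhdsWithin)).exists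
    filter_upwards [h k hk] with i hi
    refine ((le_div_iff₀ hpos).2 ?_).trans_lt hbk
    linarith [hi.1]

/-- The sets `A i` converge to `Ω` along `l` up to homotheties centred at the origin: each of
`A i` and `Ω` is eventually contained in the dilation of the other one by any factor `k > 1`. For
convex domains containing a fixed ball around the origin and contained in another one, this is
convergence in the Hausdorff distance. -/
def HomotheticallyTendsto {ι E : Type*} [SMul ℝ E] (A : ι → Set E) (l : Filter ι) (Ω : Set E) :
    Prop :=
  ∀ k : ℝ, 1 < k → ∀ᶠ i in l, A i ⊆ k • Ω ∧ Ω ⊆ k • A i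

/-- The open convex sets of inradius at least `r` and circumradius at most `R`, with both radii
measured from the origin. -/
def convexDomains {E : Type*} [SeminormedAddCommGroup E] [Module ℝ E] (r R : ℝ) : Set (Set E) :=
  {Ω | IsOpen Ω ∧ Convex ℝ Ω ∧ ball 0 r ⊆ Ω ∧ Ω ⊆ closedBall 0 R}

namespace HomotheticallyTendsto

variable {ι E : Type*} [NormedAddCommGroup E] [NormedSpace ℝ E] [MeasurableSpace E] [BorelSpace E]
  [FiniteDimensional ℝ E] {μ : Measure E} [μ.IsAddHaarMeasure] {l : Filter ι} {A : ι → Set E}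
  {Ω : Set E}

theorem tendsto_measureReal (h : HomotheticallyTendsto A l Ω) (hΩ : Bornology.IsBounded Ω) :
    Tendsto (fun i ↦ μ.real (A i)) l (𝓝 (μ.real Ω)) := by
  have hpow : Tendsto (fun k : ℝ ↦ k ^ finrank ℝ E) (𝓝[>] 1) (𝓝 1) := by
    simpa using ((continuous_pow (finrank ℝ E)).tendsto (1 : ℝ)).mono_left nhdsWithin_le_nhds
  refine tendsto_of_forall_eventually_le_and_le (e := 0) hpow tendsto_const_nhds fun k hk ↦ ?_
  have hk0 : 0 ≤ k := zero_le_one.trans hk.le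
  have hreal (s : Set E) : μ.real (k • s) = k ^ finrank ℝ E * μ.real s := by
    simpa using measureReal_vadd_smul μ s 0 hk0
  have hfinite {s : Set E} (hs : Bornology.IsBounded s) : μ (k • s) ≠ ⊤ :=
    (hs.smul₀ k).measure_lt_top.ne
  filter_upwards [h k hk] with i ⟨hAΩ, hΩA⟩
  simp only [Pi.zero_apply, zero_mul, add_zero, ← hreal]
  exact ⟨measureReal_mono hAΩ (hfinite hΩ),
    measureReal_mono hΩA (hfinite ((hΩ.smul₀ k).subset hAΩ))⟩

theorem tendsto_dirichletEigenvalue (h : HomotheticallyTendsto A l Ω) (hA : ∀ i, IsOpen (A i))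
    (hΩ : IsOpen Ω) (hne : Ω.Nonempty) :
    Tendsto (fun i ↦ dirichletEigenvalue μ (A i)) l (𝓝 (dirichletEigenvalue μ Ω)) := by
  have hpow : Tendsto (fun k : ℝ ↦ k ^ 2) (𝓝[>] 1) (𝓝 1) := by
    simpa using ((continuous_pow 2).tendsto (1 : ℝ)).mono_left nhdsWithin_le_nhds
  refine tendsto_of_forall_eventually_le_and_le (e := 0) hpow tendsto_const_nhds fun k hk ↦ ?_
  have hscale (s : Set E) : dirichletEigenvalue μ s = k ^ 2 * dirichletEigenvalue μ (k • s) := by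
    simpa using dirichletEigenvalue_eq_sq_mul μ s 0 (one_pos.trans hk)
  filter_upwards [h k hk] with i ⟨hAΩ, hΩA⟩
  have hA_ne : (A i).Nonempty := smul_set_nonempty.1 (hne.mono hΩA)
  simp only [Pi.zero_apply, zero_mul, add_zero]
  constructor
  · rw [hscale (A i)]
    exact mul_le_mul_of_nonneg_left
      (dirichletEigenvalue_anti hΩA (dirichletTests_nonempty hΩ hne)) (sq_nonneg k)
  · rw [hscale Ω]
    exact mul_le_mul_of_nonneg_left
      (dirichletEigenvalue_anti hAΩ (dirichletTests_nonempty (hA i) hA_ne)) (sq_nonneg k)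

theorem tendsto_neumannEigenvalue [Nontrivial E] (h : HomotheticallyTendsto A l Ω) {r R : ℝ}
    (hr : 0 < r) (hA : ∀ i, A i ∈ convexDomains r R) (hΩ : Ω ∈ convexDomains r R) :
    Tendsto (fun i ↦ neumannEigenvalue (μ.restrict (A i))) l
      (𝓝 (neumannEigenvalue (μ.restrict Ω))) := by
  have hpow : Tendsto (fun k : ℝ ↦ k ^ (2 * finrank ℝ E)) (𝓝[>] 1) (𝓝 1) := by
    simpa using ((continuous_pow (2 * finrank ℝ E)).tendsto (1 : ℝ)).mono_left nhdsWithin_le_nhds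
  have hdefect : Tendsto (fun k : ℝ ↦ k ^ (2 * finrank ℝ E) * ((1 - (k ^ 2)⁻¹) * R ^ 2))
      (𝓝[>] 1) (𝓝 0) := by
    have hcont : ContinuousAt (fun k : ℝ ↦ (1 - (k ^ 2)⁻¹) * R ^ 2) 1 := by fun_prop (disch := simp)
    simpa using hpow.mul (hcont.tendsto.mono_left nhdsWithin_le_nhds)
  have hcompare {k : ℝ} (hk : 1 < k) {B C : Set E} (hC : C ∈ convexDomains r R) (hBC : B ⊆ k • C)
      (hCB : C ⊆ k • B) : neumannEigenvalue (μ.restrict B) ≤ k ^ (2 * finrank ℝ E) *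
      (1 + (1 - (k ^ 2)⁻¹) * R ^ 2 * neumannEigenvalue (μ.restrict B)) *
        neumannEigenvalue (μ.restrict C) := by
    obtain ⟨hopen, hconvex, hball, hsub⟩ := hC
    have hzero : (0 : E) ∈ C := hball (mem_ball_self hr)
    exact neumannEigenvalue_restrict_le_of_subset_smul hk hopen.measurableSet
      (hconvex.starConvex hzero) hsub (neumannTests_restrict_nonempty hopen ⟨0, hzero⟩
        (isBounded_closedBall.subset hsub)) hBC hCB
  refine tendsto_of_forall_eventually_le_and_le hpow hdefect fun k hk ↦ ?_
  filter_upwards [h k hk] with i ⟨hAΩ, hΩA⟩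
  have hupper := hcompare hk hΩ hAΩ hΩA
  have hlower := hcompare hk (hA i) hΩA hAΩ
  constructor <;> linarith

end HomotheticallyTendsto

end Convergence

/-! ### A selection theorem for convex domains -/

section Selection

theorem tendstoUniformlyOn_of_lipschitzWith {ι X Y : Type*} [PseudoMetricSpace X]
    [PseudoMetricSpace Y] {l : Filter ι} {F : ι → X → Y} {f : X → Y} {C : NNReal} {K : Set X}
    (hF : ∀ i, LipschitzWith C (F i)) (hlim : Tendsto F l (𝓝 f)) (hK : IsCompact K) :
    TendstoUniformlyOn F f l K := by
  have heq : EquicontinuousOn F K :=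
    (LipschitzWith.uniformEquicontinuous F C hF).equicontinuous.equicontinuousOn K
  have hpi : Tendsto ((⋃₀ {K}).domRestrict ∘ F) l (𝓝 ((⋃₀ {K}).domRestrict f)) :=
    tendsto_pi_nhds.2 fun x ↦ tendsto_pi_nhds.1 hlim x
  exact UniformOnFun.tendsto_iff_tendstoUniformlyOn.1
    ((EquicontinuousOn.tendsto_uniformOnFun_iff_pi' (by simpa) (by simpa) l f).2 hpi) K rfl

namespace convexDomains

variable {ι E : Type*} [NormedAddCommGroup E] [NormedSpace ℝ E] {r R : ℝ} {Ω : Set E} {x : E}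

theorem mem_iff_gauge_lt_one (hr : 0 < r) (hΩ : Ω ∈ convexDomains r R) :
    x ∈ Ω ↔ gauge Ω x < 1 := by
  obtain ⟨hopen, hconvex, hball, -⟩ := hΩ
  rw [gauge_lt_one_iff_mem_interior hconvex
    (hopen.mem_nhds (hball (mem_ball_self hr))), hopen.interior_eq]

theorem mem_smul_iff_gauge_lt (hr : 0 < r) (hΩ : Ω ∈ convexDomains r R) {k : ℝ} (hk : 0 < k) :
    x ∈ k • Ω ↔ gauge Ω x < k := by
  rw [mem_smul_set_iff_inv_smul_mem₀ hk.ne', mem_iff_gauge_lt_one hr hΩ,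
    gauge_smul_of_nonneg (inv_nonneg.2 hk.le), smul_eq_mul, inv_mul_lt_iff₀ hk, mul_one]

theorem gauge_le_norm_div (hr : 0 < r) (hΩ : Ω ∈ convexDomains r R) : gauge Ω x ≤ ‖x‖ / r :=
  (le_div_iff₀' hr).2 (mul_gauge_le_norm hΩ.2.2.1)

theorem lipschitzWith_gauge (hr : 0 < r) (hΩ : Ω ∈ convexDomains r R) :
    LipschitzWith r.toNNReal⁻¹ (gauge Ω) :=
  hΩ.2.1.lipschitzWith_gauge (Real.toNNReal_pos.2 hr) (by
    rw [Real.coe_toNNReal r hr.le]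
    exact hΩ.2.2.1)

theorem convexOn_gauge (hr : 0 < r) (hΩ : Ω ∈ convexDomains r R) :
    ConvexOn ℝ univ (gauge Ω) := by
  obtain ⟨hopen, hconvex, hball, -⟩ := hΩ
  refine ⟨convex_univ, fun x _ y _ s t hs ht _ ↦ ?_⟩
  simpa only [gauge_smul_of_nonneg hs, gauge_smul_of_nonneg ht] using gauge_add_le hconvex
    (absorbent_nhds_zero (hopen.mem_nhds (hball (mem_ball_self hr)))) (s • x) (t • y)

variable {A : ι → Set E} {l : Filter ι} {g : E → ℝ}

theorem exists_tendsto_gauge (hr : 0 < r) (hA : ∀ i, A i ∈ convexDomains r R)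
    (U : Ultrafilter ι) : ∃ g, Tendsto (fun i ↦ gauge (A i)) U (𝓝 g) := by
  have hcompact : IsCompact (univ.pi fun x : E ↦ Icc 0 (‖x‖ / r)) :=
    isCompact_univ_pi fun _ ↦ isCompact_Icc
  obtain ⟨g, -, hg⟩ := hcompact.ultrafilter_le_nhds (U.map fun i ↦ gauge (A i))
    (le_principal_iff.2 (mem_map.2 (Eventually.of_forall fun i _ _ ↦
      ⟨gauge_nonneg _, gauge_le_norm_div hr (hA i)⟩)))
  exact ⟨g, hg⟩

theorem ofPred_lt_one_mem_convexDomains [l.NeBot] (hr : 0 < r)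
    (hA : ∀ i, A i ∈ convexDomains r R) (hg : Tendsto (fun i ↦ gauge (A i)) l (𝓝 g)) :
    {x | g x < 1} ∈ convexDomains r R := by
  have hcontinuous : Continuous g := (isClosed_setOfPred_lipschitzWith r.toNNReal⁻¹).mem_of_tendsto
    hg (Eventually.of_forall fun i ↦ lipschitzWith_gauge hr (hA i)) |>.continuous
  have hconvex : ConvexOn ℝ univ g := isClosed_setOfPred_convexOn.mem_of_tendsto
    hg (Eventually.of_forall fun i ↦ convexOn_gauge hr (hA i))
  refine ⟨isOpen_lt hcontinuous continuous_const, ?_, fun x hx ↦ ?_, fun x hx ↦ ?_⟩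
  · simpa using hconvex.convex_lt 1
  · calc g x ≤ ‖x‖ / r := le_of_tendsto' (tendsto_pi_nhds.1 hg x) fun i ↦
          gauge_le_norm_div hr (hA i)
      _ < 1 := (div_lt_one hr).2 (mem_ball_zero_iff.1 hx)
  · obtain ⟨i, hi⟩ := ((tendsto_pi_nhds.1 hg x).eventually (gt_mem_nhds hx)).exists
    exact (hA i).2.2.2 ((mem_iff_gauge_lt_one hr (hA i)).2 hi)

theorem homotheticallyTendsto_ofPred_lt_one [l.NeBot] [ProperSpace E] (hr : 0 < r)
    (hA : ∀ i, A i ∈ convexDomains r R) (hg : Tendsto (fun i ↦ gauge (A i)) l (𝓝 g)) :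
    HomotheticallyTendsto A l {x | g x < 1} := by
  intro k hk
  have hk0 : 0 < k := one_pos.trans hk
  have hhomogeneous (x : E) : g (k⁻¹ • x) = k⁻¹ * g x := by
    refine tendsto_nhds_unique (tendsto_pi_nhds.1 hg _) ?_
    simpa only [gauge_smul_of_nonneg (inv_nonneg.2 hk0.le)] using!
      (tendsto_pi_nhds.1 hg x).const_mul k⁻¹
  have huniform : TendstoUniformlyOn (fun i ↦ gauge (A i)) g l (closedBall 0 R) :=
    tendstoUniformlyOn_of_lipschitzWith (fun i ↦ lipschitzWith_gauge hr (hA i)) hg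
      (isCompact_closedBall 0 R)
  filter_upwards [tendstoUniformlyOn_iff.1 huniform (k - 1) (sub_pos.2 hk)] with i hi
  constructor
  · intro x hx
    have hclose := (abs_lt.1 (hi x ((hA i).2.2.2 hx))).2
    rw [mem_iff_gauge_lt_one hr (hA i)] at hx
    rw [mem_smul_set_iff_inv_smul_mem₀ hk0.ne', mem_ofPred_eq, hhomogeneous, inv_mul_lt_iff₀ hk0]
    linarith
  · intro x hx
    have hclose := (abs_lt.1 (hi x ((ofPred_lt_one_mem_convexDomains hr hA hg).2.2.2 hx))).1
    rw [mem_ofPred_eq] at hx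
    rw [mem_smul_iff_gauge_lt hr (hA i) hk0]
    linarith

theorem exists_homotheticallyTendsto [ProperSpace E] (hr : 0 < r)
    (hA : ∀ i, A i ∈ convexDomains r R) (U : Ultrafilter ι) :
    ∃ Ω ∈ convexDomains r R, HomotheticallyTendsto A U Ω := by
  obtain ⟨g, hg⟩ := exists_tendsto_gauge hr hA U
  exact ⟨{x | g x < 1}, ofPred_lt_one_mem_convexDomains hr hA hg,
    homotheticallyTendsto_ofPred_lt_one hr hA hg⟩

end convexDomains

end Selection

/-! ### Normalization of planar convex domains -/

section Normalization

theorem vadd_smul_mem_convexDomains {E : Type*} [NormedAddCommGroup E] [NormedSpace ℝ E]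
    {Ω : Set E} {q : E} {k r R : ℝ} (hk : 0 < k) (hopen : IsOpen Ω) (hconvex : Convex ℝ Ω)
    (hball : ball q r ⊆ Ω) (hsub : Ω ⊆ closedBall q R) :
    -(k • q) +ᵥ k • Ω ∈ convexDomains (k * r) (k * R) := by
  refine ⟨(hopen.smul₀ hk.ne').vadd _, (hconvex.smul k).vadd _, ?_, ?_⟩
  · have h := vadd_set_mono (a := -(k • q)) (smul_set_mono (a := k) hball)
    rwa [_root_.smul_ball hk.ne', vadd_ball, vadd_eq_add, neg_add_cancel,
      Real.norm_of_nonneg hk.le] at h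
  · have h := vadd_set_mono (a := -(k • q)) (smul_set_mono (a := k) hsub)
    rwa [smul_closedBall' hk.ne', vadd_closedBall, vadd_eq_add, neg_add_cancel,
      Real.norm_of_nonneg hk.le] at h

theorem exists_seminorm_sub_le_two_mul {E : Type*} [NormedAddCommGroup E] [NormedSpace ℝ E]
    [ProperSpace E] {p : Seminorm ℝ E} (hp : Continuous p) {v : E} (hv : 0 < p v) {Ω : Set E}
    (hΩ : IsOpen Ω) (hb : Bornology.IsBounded Ω) {a : E} (ha : a ∈ Ω) :
    ∃ d, a + d ∈ Ω ∧ 0 < p d ∧ ∀ x ∈ Ω, p (x - a) ≤ 2 * p d := by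
  obtain ⟨t, ht_mem, ht⟩ : ∃ t : ℝ, a + t • v ∈ Ω ∧ 0 < t := by
    have hnear : Tendsto (fun t : ℝ ↦ a + t • v) (𝓝[>] 0) (𝓝 a) :=
      (Continuous.tendsto' (by fun_prop) 0 a (by simp)).mono_left nhdsWithin_le_nhds
    exact ((hnear.eventually (hΩ.mem_nhds ha)).and self_mem_nhdsWithin).exists
  have hbdd : BddAbove ((fun x ↦ p (x - a)) '' Ω) :=
    (hb.isCompact_closure.image (by fun_prop : Continuous fun x ↦ p (x - a))).bddAbove.mono
      (image_mono subset_closure)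
  have hle {x : E} (hx : x ∈ Ω) : p (x - a) ≤ sSup ((fun x ↦ p (x - a)) '' Ω) :=
    le_csSup hbdd (mem_image_of_mem _ hx)
  have hpos : 0 < sSup ((fun x ↦ p (x - a)) '' Ω) := by
    refine lt_of_lt_of_le ?_ (hle ht_mem)
    rw [add_sub_cancel_left, map_smul_eq_mul]
    exact mul_pos (norm_pos_iff.2 ht.ne') hv
  obtain ⟨_, ⟨b, hb_mem, rfl⟩, hlt⟩ :=
    exists_lt_of_lt_csSup ((nonempty_of_mem ha).image _) (half_lt_self hpos)
  refine ⟨b - a, by simpa using hb_mem, (half_pos hpos).trans hlt, fun x hx ↦ ?_⟩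
  linarith [hle hx]

theorem abs_volumeForm_le_mul_volume {E : Type*} [NormedAddCommGroup E] [InnerProductSpace ℝ E]
    [FiniteDimensional ℝ E] [MeasurableSpace E] [BorelSpace E] {n : ℕ} [NeZero n]
    [Fact (finrank ℝ E = n)] (o : Orientation ℝ E (Fin n)) {Ω : Set E} (hconvex : Convex ℝ Ω)
    (hb : Bornology.IsBounded Ω) {a : E} {v : Fin n → E} (ha : a ∈ Ω) (hv : ∀ i, a + v i ∈ Ω) :
    |o.volumeForm v| ≤ n ^ n * volume.real Ω := by
  have hn : (0 : ℝ) < n := Nat.cast_pos.2 (NeZero.pos n)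
  have hsub : a +ᵥ parallelepiped (fun i ↦ (n : ℝ)⁻¹ • v i) ⊆ Ω := by
    rintro _ ⟨_, hx, rfl⟩
    obtain ⟨t, ht, rfl⟩ := (mem_parallelepiped_iff _ _).1 hx
    have hmean : ∑ i, (n : ℝ)⁻¹ • (a + t i • v i) ∈ Ω :=
      hconvex.sum_mem (fun _ _ ↦ inv_nonneg.2 hn.le) (by simp [hn.ne'])
        fun i _ ↦ hconvex.add_smul_mem ha (hv i) ⟨ht.1 i, ht.2 i⟩
    convert hmean using 1
    simp only [smul_add, Finset.sum_add_distrib, Finset.sum_const, Finset.card_univ,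
      Fintype.card_fin, ← Nat.cast_smul_eq_nsmul ℝ, smul_smul, mul_inv_cancel₀ hn.ne', one_smul,
      vadd_eq_add, mul_comm]
  have hvolume : volume.real (a +ᵥ parallelepiped (fun i ↦ (n : ℝ)⁻¹ • v i)) =
      (n ^ n : ℝ)⁻¹ * |o.volumeForm v| := by
    rw [measureReal_def, measure_vadd, ← o.measure_eq_volume, AlternatingMap.measure_parallelepiped,
      AlternatingMap.map_smul_univ, ENNReal.toReal_ofReal (abs_nonneg _)]
    simp [abs_mul]
  rw [← inv_mul_le_iff₀ (by positivity), ← hvolume]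
  exact measureReal_mono hsub hb.measure_lt_top.ne

theorem add_smul_add_smul_mem {E : Type*} [AddCommGroup E] [Module ℝ E] {Ω : Set E}
    (hconvex : Convex ℝ Ω) {a d q : E} (ha : a ∈ Ω) (hd : a + d ∈ Ω) (hq : a + q ∈ Ω) {s t : ℝ}
    (hs : 0 ≤ s) (ht : 0 ≤ t) (hst : s + t ≤ 1) : a + (s • d + t • q) ∈ Ω := by
  have h := hconvex.sum_mem (t := Finset.univ) (w := ![1 - s - t, s, t]) (z := ![a, a + d, a + q])
    (by simp [Fin.forall_fin_succ, hs, ht]; linarith) (by simp [Fin.sum_univ_three]; ring)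
    (by simp [Fin.forall_fin_succ, ha, hd, hq])
  convert h using 1
  simp only [Fin.sum_univ_three, Matrix.cons_val]
  module

section TwoDim

variable {E : Type*} [NormedAddCommGroup E] [InnerProductSpace ℝ E] [Fact (finrank ℝ E = 2)]
  (o : Orientation ℝ E (Fin 2)) {Ω : Set E} {a d q : E}

theorem areaForm_smul_eq (d q z : E) :
    o.areaForm d q • z = o.areaForm z q • d + o.areaForm d z • q := by
  rcases eq_or_ne d 0 with rfl | hd
  · simp
  set v := o.areaForm d q • z - (o.areaForm z q • d + o.areaForm d z • q) with hv
  have hinner : ⟪d, v⟫ = 0 := by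
    simp only [hv, inner_sub_right, inner_add_right, inner_smul_right, real_inner_self_eq_norm_sq]
    linarith [o.inner_mul_areaForm_sub d z q]
  have harea : o.areaForm d v = 0 := by
    simp only [hv, map_sub, map_add, map_smul, smul_eq_mul, Orientation.areaForm_apply_self]
    ring
  have hnorm : ‖d‖ ^ 2 * ‖v‖ ^ 2 = 0 := by simp [← o.inner_sq_add_areaForm_sq, hinner, harea]
  simpa [hd, hv, sub_eq_zero] using hnorm

theorem norm_le_norm_areaForm' (d : E) : ‖d‖ ≤ ‖o.areaForm' d‖ := by
  rcases eq_or_ne d 0 with rfl | hd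
  · simp
  · refine le_of_mul_le_mul_right ?_ (norm_pos_iff.2 hd)
    calc ‖d‖ * ‖d‖ = ‖o.areaForm' d (o.rightAngleRotation d)‖ := by
          simp [Orientation.areaForm'_apply, sq]
      _ ≤ ‖o.areaForm' d‖ * ‖d‖ := by
        simpa using (o.areaForm' d).le_opNorm (o.rightAngleRotation d)

theorem ball_subset_of_triangle (hconvex : Convex ℝ Ω) (ha : a ∈ Ω) (hd : a + d ∈ Ω)
    (hq : a + q ∈ Ω) {L : ℝ} (hdL : ‖d‖ ≤ L) (hqL : ‖q‖ ≤ L) :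
    ball (a + (3⁻¹ : ℝ) • (d + q)) (|o.areaForm d q| / (6 * L)) ⊆ Ω := by
  intro x hx
  obtain ⟨z, rfl⟩ : ∃ z, a + (3⁻¹ : ℝ) • (d + q) + z = x := ⟨_, add_sub_cancel _ x⟩
  rw [mem_ball_iff_norm, add_sub_cancel_left] at hx
  have hradius : 0 < |o.areaForm d q| / (6 * L) := (norm_nonneg z).trans_lt hx
  have hw : 0 < |o.areaForm d q| := (abs_nonneg _).lt_of_ne fun h ↦ by simp [← h] at hradius
  have hL : 0 < L := ((norm_nonneg d).trans hdL).lt_of_ne fun h ↦ by simp [← h] at hradius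
  have hz : ‖z‖ * L ≤ 6⁻¹ * |o.areaForm d q| := by
    rw [lt_div_iff₀ (by positivity)] at hx
    linarith
  have hcoord_d : |o.areaForm z q / o.areaForm d q| ≤ 6⁻¹ := by
    rw [abs_div, div_le_iff₀ hw]
    exact (o.abs_areaForm_le z q).trans ((by gcongr : _ ≤ ‖z‖ * L).trans hz)
  have hcoord_q : |o.areaForm d z / o.areaForm d q| ≤ 6⁻¹ := by
    rw [abs_div, div_le_iff₀ hw]
    exact (o.abs_areaForm_le d z).trans (((mul_comm _ _).trans_le (by gcongr)).trans hz)
  have hcramer : z = (o.areaForm z q / o.areaForm d q) • d +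
      (o.areaForm d z / o.areaForm d q) • q := by
    rw [div_eq_inv_mul, div_eq_inv_mul, mul_smul, mul_smul, ← smul_add, ← areaForm_smul_eq,
      inv_smul_smul₀ (abs_pos.1 hw)]
  rw [abs_le] at hcoord_d hcoord_q
  have hmem := add_smul_add_smul_mem hconvex ha hd hq
    (s := 3⁻¹ + o.areaForm z q / o.areaForm d q) (t := 3⁻¹ + o.areaForm d z / o.areaForm d q)
    (by linarith) (by linarith) (by linarith)
  convert hmem using 1
  nth_rewrite 1 [hcramer]
  module

theorem exists_almost_maximal_triangle (hΩ : IsOpen Ω) (hb : Bornology.IsBounded Ω) (ha : a ∈ Ω) :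
    ∃ d q, a + d ∈ Ω ∧ a + q ∈ Ω ∧ 0 < |o.areaForm d q| ∧ (∀ x ∈ Ω, ‖x - a‖ ≤ 2 * ‖d‖) ∧
      ∀ x ∈ Ω, |o.areaForm d (x - a)| ≤ 2 * |o.areaForm d q| := by
  have : FiniteDimensional ℝ E := .of_finrank_pos (by rw [Fact.out (p := finrank ℝ E = 2)]; simp)
  have : Nontrivial E := nontrivial_of_finrank_pos (R := ℝ)
    (by rw [Fact.out (p := finrank ℝ E = 2)]; simp)
  obtain ⟨v, hv⟩ := exists_ne (0 : E)
  obtain ⟨d, hd_mem, hd_pos, hd⟩ := exists_seminorm_sub_le_two_mul (p := normSeminorm ℝ E)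
    continuous_norm (norm_pos_iff.2 hv) hΩ hb ha
  replace hd_pos : 0 < ‖d‖ := hd_pos
  obtain ⟨q, hq_mem, hq_pos, hq⟩ := exists_seminorm_sub_le_two_mul
    (p := (normSeminorm ℝ ℝ).comp (o.areaForm d)) (v := o.rightAngleRotation d)
    (continuous_norm.comp (o.areaForm' d).continuous) (by simp [hd_pos]) hΩ hb ha
  exact ⟨d, q, hd_mem, hq_mem, hq_pos, hd, hq⟩

variable [FiniteDimensional ℝ E] [MeasurableSpace E] [BorelSpace E]

theorem sq_norm_le_mul_abs_areaForm (hΩ : IsOpen Ω) (hconvex : Convex ℝ Ω)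
    (hb : Bornology.IsBounded Ω) (ha : a ∈ Ω) (hd : a + d ∈ Ω) (hq : a + q ∈ Ω)
    (hpos : 0 < |o.areaForm d q|) (hwidth : ∀ x ∈ Ω, |o.areaForm d (x - a)| ≤ 2 * |o.areaForm d q|)
    {M : ℝ} (hM : volume.real Ω * dirichletEigenvalue volume Ω ≤ M) :
    ‖d‖ ^ 2 ≤ 64 * M * |o.areaForm d q| := by
  have hstrip : ‖d‖ ^ 2 ≤ (2 * (2 * |o.areaForm d q|)) ^ 2 * dirichletEigenvalue volume Ω := by
    refine (pow_le_pow_left₀ (norm_nonneg d) (norm_le_norm_areaForm' o d) 2).trans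
      (norm_sq_le_mul_dirichletEigenvalue (c := o.areaForm d a) hΩ ⟨a, ha⟩ fun x hx ↦ ?_)
    simpa [Orientation.areaForm'_apply] using hwidth x hx
  have harea : |o.areaForm d q| ≤ 4 * volume.real Ω := by
    have h := abs_volumeForm_le_mul_volume o (v := ![d, q]) hconvex hb ha
      (by simp [Fin.forall_fin_succ, hd, hq])
    rw [o.areaForm_to_volumeForm]
    norm_num at h
    exact h
  refine le_of_mul_le_mul_left ?_ hpos
  calc |o.areaForm d q| * ‖d‖ ^ 2
      ≤ (4 * volume.real Ω) *
          ((2 * (2 * |o.areaForm d q|)) ^ 2 * dirichletEigenvalue volume Ω) := by gcongr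
    _ = 64 * |o.areaForm d q| ^ 2 * (volume.real Ω * dirichletEigenvalue volume Ω) := by ring
    _ ≤ 64 * |o.areaForm d q| ^ 2 * M := by gcongr
    _ = |o.areaForm d q| * (64 * M * |o.areaForm d q|) := by ring

theorem exists_vadd_smul_mem_convexDomains (hΩ : IsOpen Ω) (hconvex : Convex ℝ Ω)
    (hb : Bornology.IsBounded Ω) (hne : Ω.Nonempty) {M : ℝ} (hM_pos : 0 < M)
    (hM : volume.real Ω * dirichletEigenvalue volume Ω ≤ M) :
    ∃ (c : E) (k : ℝ), 0 < k ∧ c +ᵥ k • Ω ∈ convexDomains (768 * M)⁻¹ 3 := by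
  let o : Orientation ℝ E (Fin 2) :=
    ((stdOrthonormalBasis ℝ E).reindex (finCongr Fact.out)).toBasis.orientation
  obtain ⟨a, ha⟩ := hne
  obtain ⟨d, q, hd, hq, hpos, hlength, hwidth⟩ := exists_almost_maximal_triangle o hΩ hb ha
  have hd_pos : 0 < ‖d‖ := norm_pos_iff.2 fun h ↦ by simp [h] at hpos
  have hq_le : ‖q‖ ≤ 2 * ‖d‖ := by simpa using hlength (a + q) hq
  have hcenter : ‖(3⁻¹ : ℝ) • (d + q)‖ ≤ ‖d‖ := by
    rw [norm_smul, Real.norm_of_nonneg (by norm_num)]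
    linarith [norm_add_le d q]
  have hball : ball (a + (3⁻¹ : ℝ) • (d + q)) (‖d‖ * (768 * M)⁻¹) ⊆ Ω := by
    refine (ball_subset_ball ?_).trans
      (ball_subset_of_triangle o hconvex ha hd hq (by linarith) hq_le)
    have hsize := sq_norm_le_mul_abs_areaForm o hΩ hconvex hb ha hd hq hpos hwidth hM
    rw [← div_eq_mul_inv, div_le_div_iff₀ (by positivity) (by positivity)]
    linarith
  have hsub : Ω ⊆ closedBall (a + (3⁻¹ : ℝ) • (d + q)) (‖d‖ * 3) := fun x hx ↦ by
    rw [mem_closedBall_iff_norm, ← sub_sub]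
    linarith [norm_sub_le (x - a) ((3⁻¹ : ℝ) • (d + q)), hlength x hx]
  have hmem := vadd_smul_mem_convexDomains (inv_pos.2 hd_pos) hΩ hconvex hball hsub
  simp only [inv_mul_cancel_left₀ hd_pos.ne'] at hmem
  exact ⟨_, ‖d‖⁻¹, inv_pos.2 hd_pos, hmem⟩

end TwoDim

end Normalization

/-! ### The diagram -/

section Diagram

variable {E : Type*} [NormedAddCommGroup E] [NormedSpace ℝ E] [MeasurableSpace E]

/-- The first Dirichlet and the first nontrivial Neumann eigenvalue of `Ω`, both multiplied by the
measure of `Ω`. In the plane this makes them invariant under homotheties, and `diagEC` is the set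
of these pairs. -/
def spectralPair (μ : Measure E) (Ω : Set E) : ℝ × ℝ :=
  (μ.real Ω * dirichletEigenvalue μ Ω, μ.real Ω * neumannEigenvalue (μ.restrict Ω))

variable [BorelSpace E] [FiniteDimensional ℝ E] {μ : Measure E} [μ.IsAddHaarMeasure]

theorem spectralPair_vadd_smul (hE : finrank ℝ E = 2) (Ω : Set E) (c : E) {k : ℝ} (hk : 0 < k) :
    spectralPair μ (c +ᵥ k • Ω) = spectralPair μ Ω := by
  rw [spectralPair, spectralPair, measureReal_vadd_smul μ Ω c hk.le, hE,
    dirichletEigenvalue_eq_sq_mul μ Ω c hk, neumannEigenvalue_restrict_eq_sq_mul μ Ω c hk]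
  ext <;> simp only <;> ring

theorem isClosed_spectralPair_image_convexDomains [Nontrivial E] {r : ℝ} (hr : 0 < r) (R : ℝ) :
    IsClosed (spectralPair μ '' convexDomains r R) := by
  refine IsSeqClosed.isClosed fun p z hp hz ↦ ?_
  choose A hA hAp using hp
  let U : Ultrafilter ℕ := .of atTop
  obtain ⟨Ω, hΩ, hlim⟩ := convexDomains.exists_homotheticallyTendsto hr hA U
  have hzero : (0 : E) ∈ Ω := hΩ.2.2.1 (mem_ball_self hr)
  have hmeasure := hlim.tendsto_measureReal (μ := μ) (isBounded_closedBall.subset hΩ.2.2.2)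
  have hdirichlet := hlim.tendsto_dirichletEigenvalue (μ := μ) (fun n ↦ (hA n).1) hΩ.1 ⟨0, hzero⟩
  have hneumann := hlim.tendsto_neumannEigenvalue (μ := μ) hr hA hΩ
  have hpair : Tendsto (fun n ↦ spectralPair μ (A n)) U (𝓝 (spectralPair μ Ω)) :=
    (hmeasure.mul hdirichlet).prodMk_nhds (hmeasure.mul hneumann)
  simp only [hAp] at hpair
  exact ⟨Ω, hΩ, tendsto_nhds_unique hpair (hz.mono_left (Ultrafilter.of_le atTop))⟩

theorem spectralPair_image_convexDomains_subset_diagEC {r : ℝ} (hr : 0 < r) (R : ℝ) :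
    spectralPair volume '' convexDomains (E := E2) r R ⊆ diagEC := by
  rintro _ ⟨Ω, ⟨hopen, hconvex, hball, hsub⟩, rfl⟩
  refine ⟨Ω, ⟨0, hball (mem_ball_self hr)⟩, hopen, isBounded_closedBall.subset hsub, hconvex, ?_⟩
  rw [dEig1_eq_dirichletEigenvalue, nEig1_eq_neumannEigenvalue, spectralPair, Measure.real]

theorem mem_spectralPair_image_convexDomains {p : ℝ × ℝ} (hp : p ∈ diagEC) {M : ℝ}
    (hM_pos : 0 < M) (hM : p.1 ≤ M) :
    p ∈ spectralPair volume '' convexDomains (E := E2) (768 * M)⁻¹ 3 := by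
  obtain ⟨Ω, hne, hopen, hbdd, hconvex, rfl⟩ := hp
  rw [dEig1_eq_dirichletEigenvalue] at hM ⊢
  rw [nEig1_eq_neumannEigenvalue]
  have : Fact (finrank ℝ E2 = 2) := ⟨finrank_euclideanSpace_fin⟩
  obtain ⟨c, k, hk, hmem⟩ := exists_vadd_smul_mem_convexDomains hopen hconvex hbdd hne hM_pos hM
  exact ⟨_, hmem, spectralPair_vadd_smul Fact.out Ω c hk⟩

end Diagram

/-- The convex Blaschke–Santaló diagram `𝓔ᶜ` is a closed subset of `ℝ²`. -/
theorem diagEC_isClosed : IsClosed diagEC := by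
  refine isClosed_of_closure_subset fun p hp ↦ ?_
  set M := |p.1| + 1
  have hM : 0 < M := by positivity
  have hlt : p ∈ {q : ℝ × ℝ | q.1 < M} := (le_abs_self p.1).trans_lt (lt_add_one _)
  have hclosure : p ∈ closure ({q : ℝ × ℝ | q.1 < M} ∩ diagEC) :=
    (isOpen_lt continuous_fst continuous_const).inter_closure ⟨hlt, hp⟩
  have hnormalized : {q : ℝ × ℝ | q.1 < M} ∩ diagEC ⊆
      spectralPair volume '' convexDomains (E := E2) (768 * M)⁻¹ 3 :=
    fun q hq ↦ mem_spectralPair_image_convexDomains hq.2 hM hq.1.le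
  have hclosed := isClosed_spectralPair_image_convexDomains (E := E2) (μ := volume)
    (inv_pos.2 (by positivity : 0 < 768 * M)) 3
  exact spectralPair_image_convexDomains_subset_diagEC (inv_pos.2 (by positivity)) 3
    (closure_minimal hnormalized hclosed hclosure)
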